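/- Let x be either an aperiodic two-sided infinite word over A, or an aperiodic recurrent one-sided infinite word over A. Then there exist languages S, T ⊆ A* with Fac(x) ⊆ S T such that for every n ≥ 6, p_S(n) ≤ 12 p_x(8n)/n + 192 p_x(8n) p_x(3n)/n² and p_T(n) ≤ 12 p_x(8n)/n + 192 p_x(8n) p_x(3n)/n². -/

import Mathlib

open scoped ENNReal Pointwise

universe u

variable {A : Type u}

/-- The factor of `x` of length `n` starting at position `i`. -/
def wordSeg (x : ℕ → A) (i n : ℕ) : List A := (List.range n).map fun j => x (i + j)

/-- The set of finite factors of a one-sided infinite word (including the empty word). -/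
def Fac (x : ℕ → A) : Set (List A) := {u | ∃ i n, u = wordSeg x i n}

/-- The factor of a two-sided word `x` of length `n` starting at position `i`. -/
def wordSegZ (x : ℤ → A) (i : ℤ) (n : ℕ) : List A := (List.range n).map fun j => x (i + j)

/-- The set of finite factors of a two-sided infinite word (including the empty word). -/
def FacZ (x : ℤ → A) : Set (List A) := {u | ∃ (i : ℤ) (n : ℕ), u = wordSegZ x i n}

/-- The complexity of a language: the number of words of length `n` in it. -/
noncomputable def complexity (L : Set (List A)) (n : ℕ) : ℕ :=
  {u ∈ L | u.length = n}.ncard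

/-- The accumulative complexity `p*_L(n) = Σ_{i=0}^{n} p_L(i)`. -/
noncomputable def accComplexity (L : Set (List A)) (n : ℕ) : ℕ :=
  ∑ i ∈ Finset.range (n + 1), complexity L i

/-- Concatenation (product) of two languages. -/
def prodL (S T : Set (List A)) : Set (List A) := {w | ∃ s ∈ S, ∃ t ∈ T, w = s ++ t}

/-- `powL S k` = `S^k`, the set of concatenations of `k` elements of `S`. -/
def powL (S : Set (List A)) : ℕ → Set (List A)
  | 0 => {([] : List A)}
  | k + 1 => prodL (powL S k) S

/-- `f(n) = O(n^α)`. -/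
def PolyBound (f : ℕ → ℕ) (α : ℝ) : Prop :=
  ∃ C : ℝ, ∀ n : ℕ, 1 ≤ n → (f n : ℝ) ≤ C * (n : ℝ) ^ α

/-- The `α`-dimension `d_α(L)`: infimum of the integers `k ≥ 1` such that `L ⊆ S^k`
for some language `S` with `p_S(n) = O(n^α)`, with `inf ∅ = ⊤`. -/
noncomputable def polyDim (α : ℝ) (L : Set (List A)) : ℕ∞ :=
  sInf {k : ℕ∞ | ∃ m : ℕ, k = m ∧ 1 ≤ m ∧
    ∃ S : Set (List A), PolyBound (complexity S) α ∧ L ⊆ powL S m}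

/-- The accumulative `α`-dimension `d*_α(L)`. -/
noncomputable def polyDimStar (α : ℝ) (L : Set (List A)) : ℕ∞ :=
  sInf {k : ℕ∞ | ∃ m : ℕ, k = m ∧ 1 ≤ m ∧
    ∃ S : Set (List A), PolyBound (accComplexity S) α ∧ L ⊆ powL S m}

/-- The cost `c(L)`: infimum of the `α ≥ 0` with `d_α(L) < +∞`, with `inf ∅ = ⊤`. -/
noncomputable def cost (L : Set (List A)) : ℝ≥0∞ :=
  sInf {a : ℝ≥0∞ | ∃ α : ℝ, 0 ≤ α ∧ a = ENNReal.ofReal α ∧ polyDim α L ≠ ⊤}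

/-- A one-sided word is ultimately periodic if it is of the form `u v v v ⋯`. -/
def UltimatelyPeriodic (x : ℕ → A) : Prop :=
  ∃ N p : ℕ, 0 < p ∧ ∀ n : ℕ, N ≤ n → x (n + p) = x n

/-- A two-sided word is eventually periodic if it is periodic far enough to the right
and far enough to the left. -/
def EventuallyPeriodicZ (x : ℤ → A) : Prop :=
  (∃ p : ℕ, 0 < p ∧ ∃ N : ℤ, ∀ n : ℤ, N ≤ n → x (n + p) = x n) ∧
  (∃ p : ℕ, 0 < p ∧ ∃ N : ℤ, ∀ n : ℤ, n ≤ N → x (n - p) = x n)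

/-- A one-sided word is recurrent if each of its factors occurs infinitely often. -/
def Recurrent (x : ℕ → A) : Prop :=
  ∀ u ∈ Fac x, ∀ N : ℕ, ∃ i : ℕ, N ≤ i ∧ u = wordSeg x i u.length

/-- `u` is a right special factor for the language `F`. -/
def RightSpecial (F : Set (List A)) (u : List A) : Prop :=
  u ∈ F ∧ ∃ a b : A, a ≠ b ∧ u ++ [a] ∈ F ∧ u ++ [b] ∈ F

/-- `M` is a `D`-marker set for a word with factor set `F`: every factor of length
at least `D n` contains a factor of length `n` belonging to `M`. -/
def MarkerSet (D : ℕ) (M F : Set (List A)) : Prop :=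
  ∀ n : ℕ, 1 ≤ n → ∀ u ∈ F, D * n ≤ u.length →
    ∃ v ∈ M, v.length = n ∧ v <:+: u

/-- A language is factorial if it contains all factors of its members. -/
def IsFactorial (S : Set (List A)) : Prop := ∀ u ∈ S, ∀ v : List A, v <:+: u → v ∈ S

/-- The bound `Σ_{k ∈ I_n ∩ ℕ} p_M(2^k)(1 + 4 p(3n)/2^k)` where
`I_n = (log₂(n/(2D)), log₂(2n)]`, i.e. the sum is over natural `k` with
`n/(2D) < 2^k ≤ 2n`. -/
noncomputable def markerBound (M F : Set (List A)) (D n : ℕ) : ℝ :=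
  ∑ k ∈ (Finset.range (2 * n + 2)).filter (fun k => n < 2 * D * 2 ^ k ∧ 2 ^ k ≤ 2 * n),
    (complexity M (2 ^ k) : ℝ) * (1 + 4 * (complexity F (3 * n) : ℝ) / 2 ^ k)

-- The word `u = ∏_{i=1}^{∞} a b^i = a b a b b a b b b ⋯` over `{a,b}`, with
-- `a = false`, `b = true`: position `n` carries an `a` iff `n = (i-1)(i+2)/2` for some
-- `i ≥ 1`, i.e. iff `2n = m(m+3)` for some `m ≥ 0`.
open Classical in
noncomputable def uWord (n : ℕ) : Bool :=
  if ∃ m : ℕ, 2 * n = m * (m + 3) then false else true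

/-! ### Basic facts on segments -/

theorem seg_def (x : ℤ → A) (i : ℤ) (n : ℕ) :
    wordSegZ x i n = (List.range n).map fun j : ℕ => x (i + (j : ℤ)) := by
  unfold wordSegZ
  simp only [List.pure_def, List.bind_eq_flatMap, List.map_flatMap, List.map_cons, List.map_nil]
  rw [← List.map_eq_flatMap]

/-- equality of two segments, letter by letter -/
theorem seg_eq_iff (x y : ℤ → A) (i j : ℤ) (n : ℕ) :
    wordSegZ x i n = wordSegZ y j n ↔ ∀ r : ℤ, 0 ≤ r → r < n → x (i + r) = y (j + r) := by
  rw [seg_def, seg_def]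
  constructor
  · intro h r h0 hn
    obtain ⟨k, rfl⟩ := Int.eq_ofNat_of_zero_le h0
    have := congrArg (fun l => l[k]?) h
    have hk : k < n := by exact_mod_cast hn
    simpa [hk] using this
  · intro h
    apply List.map_congr_left
    intro k hk
    exact h k (by omega) (by simpa using hk)

theorem seg_length (x : ℤ → A) (i : ℤ) (n : ℕ) : (wordSegZ x i n).length = n := by
  simp [seg_def]

theorem seg_take (x : ℤ → A) (i : ℤ) (n k : ℕ) (h : k ≤ n) :
    (wordSegZ x i n).take k = wordSegZ x i k := by
  simp [seg_def, ← List.map_take, List.take_range, h]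

theorem seg_append (x : ℤ → A) (i : ℤ) (n k : ℕ) :
    wordSegZ x i (n + k) = wordSegZ x i n ++ wordSegZ x (i + n) k := by
  simp [seg_def, List.range_add, Function.comp_def, add_assoc]

theorem seg_drop (x : ℤ → A) (i : ℤ) (n k : ℕ) :
    (wordSegZ x i (n + k)).drop n = wordSegZ x (i + n) k := by
  rw [seg_append]
  simp [seg_length]

theorem words_finite [Fintype A] (n : ℕ) : {u : List A | u.length = n}.Finite :=
  List.finite_length_eq A n

theorem facZ_len (x : ℤ → A) (n : ℕ) :
    {u ∈ FacZ x | u.length = n} = Set.range (fun i => wordSegZ x i n) := by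
  ext u
  constructor
  · rintro ⟨⟨i, k, rfl⟩, hk⟩
    rw [seg_length] at hk
    subst hk
    exact ⟨i, rfl⟩
  · rintro ⟨i, rfl⟩
    exact ⟨⟨i, n, rfl⟩, seg_length _ _ _⟩

theorem complexity_facZ (x : ℤ → A) (n : ℕ) :
    complexity (FacZ x) n = (Set.range (fun i => wordSegZ x i n)).ncard := by
  rw [complexity, facZ_len]

theorem range_seg_finite [Fintype A] (x : ℤ → A) (n : ℕ) :
    (Set.range (fun i => wordSegZ x i n)).Finite :=
  (words_finite n).subset (by rintro _ ⟨i, rfl⟩; exact seg_length _ _ _)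

theorem complexity_mono [Fintype A] (x : ℤ → A) {n k : ℕ} (h : n ≤ k) :
    complexity (FacZ x) n ≤ complexity (FacZ x) k := by
  rw [complexity_facZ, complexity_facZ]
  have : Set.range (fun i => wordSegZ x i n) =
      (List.take n) '' Set.range (fun i => wordSegZ x i k) := by
    ext u
    constructor
    · rintro ⟨i, rfl⟩
      exact ⟨_, ⟨i, rfl⟩, seg_take _ _ _ _ h⟩
    · rintro ⟨_, ⟨i, rfl⟩, rfl⟩
      exact ⟨i, (seg_take _ _ _ _ h).symm⟩
  rw [this]
  exact Set.ncard_image_le (range_seg_finite x k)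

/-- general injection count into the factors of length `l` -/
theorem card_mul_le [Fintype A] {β : Type*} (x : ℤ → A) (Z : Set β) (h l : ℕ)
    (f : β → ℕ → ℤ)
    (hinj : ∀ z ∈ Z, ∀ z' ∈ Z, ∀ j < h, ∀ j' < h,
      wordSegZ x (f z j) l = wordSegZ x (f z' j') l → z = z' ∧ j = j') :
    h * Z.ncard ≤ complexity (FacZ x) l := by
  rw [complexity_facZ]
  have h1 : (Set.Iio h ×ˢ Z).ncard = h * Z.ncard := by
    rw [Set.ncard_prod]
    congr 1
    rw [← Finset.coe_Iio, Set.ncard_coe_finset]; simp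
  rw [← h1]
  refine Set.ncard_le_ncard_of_injOn (fun a => wordSegZ x (f a.2 a.1) l) ?_ ?_ ?_
  · rintro ⟨j, z⟩ -
    exact ⟨_, rfl⟩
  · rintro ⟨j, z⟩ ⟨hj, hz⟩ ⟨j', z'⟩ ⟨hj', hz'⟩ he
    obtain ⟨h1, h2⟩ := hinj z hz z' hz' j hj j' hj' he
    subst h1 h2
    rfl
  · exact range_seg_finite x l

/-- not eventually periodic to the right -/
def RightAper (x : ℤ → A) : Prop :=
  ∀ p : ℕ, 0 < p → ∀ N : ℤ, ∃ n : ℤ, N ≤ n ∧ x (n + p) ≠ x n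

theorem tail_count [Fintype A] (x : ℤ → A) (hx : RightAper x) (N : ℤ) (n : ℕ) :
    n + 1 ≤ ((fun i => wordSegZ x i n) '' Set.Ici N).ncard := by
  have hfin : ∀ n, ((fun i => wordSegZ x i n) '' Set.Ici N).Finite := fun n =>
    (range_seg_finite x n).subset (Set.image_subset_range _ _)
  induction n with
  | zero =>
    rw [Nat.succ_le_iff, Set.ncard_pos (hfin 0)]
    exact ⟨_, N, Set.mem_Ici.2 le_rfl, rfl⟩
  | succ n ih =>
    by_contra hlt
    push Not at hlt
    have himg : (fun i => wordSegZ x i n) '' Set.Ici N =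
        List.take n '' ((fun i => wordSegZ x i (n + 1)) '' Set.Ici N) := by
      rw [Set.image_image]
      apply Set.image_congr
      intro i _
      exact (seg_take x i (n + 1) n (by omega)).symm
    have hinj : Set.InjOn (List.take n) ((fun i => wordSegZ x i (n + 1)) '' Set.Ici N) := by
      apply Set.injOn_of_ncard_image_eq _ (hfin _)
      apply le_antisymm
      · exact Set.ncard_image_le (hfin _)
      · rw [← himg]; omega
    -- determinism
    have hdet : ∀ i j : ℤ, N ≤ i → N ≤ j → wordSegZ x i n = wordSegZ x j n →
        wordSegZ x i (n + 1) = wordSegZ x j (n + 1) := by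
      intro i j hi hj he
      apply hinj ⟨i, hi, rfl⟩ ⟨j, hj, rfl⟩
      rw [seg_take _ _ _ _ (by omega), seg_take _ _ _ _ (by omega), he]
    have hpig : ∃ a ∈ Set.Ici N, ∃ b ∈ Set.Ici N, a ≠ b ∧ wordSegZ x a n = wordSegZ x b n :=
      Set.Infinite.exists_ne_map_eq_of_mapsTo (Set.Ici_infinite N)
        (Set.mapsTo_image (fun i => wordSegZ x i n) (Set.Ici N)) (hfin n)
    have key : ∀ a b : ℤ, N ≤ a → a < b → wordSegZ x a n = wordSegZ x b n → False := by
      intro a b ha hab he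
      have hall : ∀ k : ℕ, wordSegZ x (a + k) n = wordSegZ x (b + k) n := by
        intro k
        induction k with
        | zero => simpa using he
        | succ k ihk =>
          have := hdet _ _ (by omega) (by omega) ihk
          rw [seg_eq_iff] at this ⊢
          intro r h0 hr
          have := this (r + 1) (by omega) (by push_cast; omega)
          push_cast
          convert this using 2 <;> ring
      obtain ⟨c, hc, hne⟩ := hx (b - a).toNat (by omega) (a + n)
      obtain ⟨k, hk⟩ := Int.eq_ofNat_of_zero_le (show 0 ≤ c - a - n by omega)
      have h2 := hdet _ _ (by omega) (by omega) (hall k)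
      rw [seg_eq_iff] at h2
      have h3 := h2 n (by omega) (by push_cast; omega)
      apply hne
      rw [show c + ((b - a).toNat : ℤ) = b + k + n by omega, show c = a + k + n by omega]
      exact h3.symm
    obtain ⟨a, ha, b, hb, hne, he⟩ := hpig
    rcases lt_or_gt_of_ne hne with h | h
    · exact key a b ha h he
    · exact key b a hb h he.symm

/-- many positions far to the right with distinct factors -/
theorem tail_inj [Fintype A] (x : ℤ → A) (hx : RightAper x) (N : ℤ) (n m : ℕ) (hm : m ≤ n) :
    ∃ f : ℕ → ℤ, (∀ j, N ≤ f j) ∧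
      ∀ j < m, ∀ j' < m, wordSegZ x (f j) n = wordSegZ x (f j') n → j = j' := by
  have h := tail_count x hx N n
  set K := (fun i => wordSegZ x i n) '' Set.Ici N with hK
  have hfin : K.Finite := (range_seg_finite x n).subset (Set.image_subset_range _ _)
  obtain ⟨t, ht, htc⟩ := Set.exists_subset_card_eq (show m ≤ K.ncard by omega)
  have htf : t.Finite := hfin.subset ht
  obtain ⟨g, hg⟩ : ∃ g : Fin m → List A, Function.Injective g ∧ ∀ j, g j ∈ K := by
    have hcard : Nat.card t = m := htc
    have := htf.to_subtype
    have e := (Finite.equivFinOfCardEq hcard).symm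
    exact ⟨fun j => (e j : List A), fun a b hab => e.injective (Subtype.ext hab),
      fun j => ht (e j).2⟩
  choose p hp using hg.2
  refine ⟨fun j => if hj : j < m then p ⟨j, hj⟩ else N, ?_, ?_⟩
  · intro j
    dsimp only
    split
    · exact (hp _).1
    · exact le_rfl
  · intro j hj j' hj' he
    simp only [hj, hj', dif_pos] at he
    have h1 := (hp ⟨j, hj⟩).2
    have h2 := (hp ⟨j', hj'⟩).2
    dsimp only at h1 h2
    rw [h1, h2] at he
    simpa using hg.1 he

/-- window `[i, i+3m)` is good for `v` with respect to `M` and the ranking `e` -/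
def GoodAt (x : ℤ → A) (e : List A → ℕ) (M : Set (List A)) (m : ℕ) (v : List A) (i : ℤ) : Prop :=
  wordSegZ x (i + m) m = v ∧ ∀ j : ℤ, 0 ≤ j → j ≤ 2 * m → wordSegZ x (i + j) m ∈ M →
    ¬ e (wordSegZ x (i + j) m) < e v

theorem exists_greedy (x : ℤ → A) (e : List A → ℕ) (m : ℕ) :
    ∃ M : Set (List A), ∀ v, v ∈ M ↔ ∃ i, GoodAt x e M m v i := by
  let wf : WellFounded (fun a b : List A => e a < e b) := (measure e).wf
  let F : (v : List A) → ((u : List A) → e u < e v → Prop) → Prop := fun v rec =>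
    ∃ i : ℤ, wordSegZ x (i + m) m = v ∧ ∀ j : ℤ, 0 ≤ j → j ≤ 2 * m →
      ∀ h : e (wordSegZ x (i + j) m) < e v, ¬ rec _ h
  refine ⟨{v | wf.fix F v}, fun v => ?_⟩
  show wf.fix F v ↔ _
  rw [wf.fix_eq]
  simp only [F, GoodAt, Set.mem_ofPred_eq]
  constructor
  · rintro ⟨i, h1, h2⟩
    exact ⟨i, h1, fun j h0 hj hM hlt => h2 j h0 hj hlt hM⟩
  · rintro ⟨i, h1, h2⟩
    exact ⟨i, h1, fun j h0 hj hlt hM => h2 j h0 hj hM hlt⟩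

theorem goodAt_congr (x : ℤ → A) (e : List A → ℕ) (M : Set (List A)) (m : ℕ) (v : List A)
    (i i' : ℤ) (h : ∀ r : ℤ, 0 ≤ r → r < 3 * m → x (i + r) = x (i' + r))
    (hg : GoodAt x e M m v i) : GoodAt x e M m v i' := by
  have hs : ∀ j : ℤ, 0 ≤ j → j ≤ 2 * m → wordSegZ x (i + j) m = wordSegZ x (i' + j) m := by
    intro j h0 hj
    rw [seg_eq_iff]
    intro r hr0 hr
    have := h (j + r) (by omega) (by omega)
    rwa [← add_assoc, ← add_assoc] at this
  refine ⟨?_, ?_⟩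
  · rw [← hs m (by omega) (by omega)]; exact hg.1
  · intro j h0 hj
    rw [← hs j h0 hj]
    exact hg.2 j h0 hj

theorem good_class [Fintype A] (x : ℤ → A) (hx : RightAper x) (e : List A → ℕ)
    (M : Set (List A)) (m : ℕ) (v : List A) (i0 : ℤ) (h0 : GoodAt x e M m v i0) :
    ∃ f : ℕ → ℤ, (∀ j < m, ∃ a : ℤ, 0 ≤ a ∧ a ≤ m ∧ GoodAt x e M m v (f j + a)) ∧
      ∀ j < m, ∀ j' < m, wordSegZ x (f j) (4 * m) = wordSegZ x (f j') (4 * m) → j = j' := by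
  by_cases htail : ∀ k : ℕ, ∃ a : ℤ, 0 ≤ a ∧ a ≤ m ∧ GoodAt x e M m v (i0 + k + a)
  · obtain ⟨f, hf1, hf2⟩ := tail_inj x hx i0 (4 * m) m (by omega)
    refine ⟨f, fun j _ => ?_, hf2⟩
    obtain ⟨k, hk⟩ := Int.eq_ofNat_of_zero_le (sub_nonneg.2 (hf1 j))
    obtain ⟨a, ha⟩ := htail k
    refine ⟨a, ?_⟩
    rwa [show f j + a = i0 + k + a by omega]
  · push Not at htail
    classical
    obtain ⟨k, hk, hmin⟩ : ∃ k : ℕ, (∀ a : ℤ, 0 ≤ a → a ≤ m → ¬ GoodAt x e M m v (i0 + k + a)) ∧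
        ∀ k' < k, ¬ (∀ a : ℤ, 0 ≤ a → a ≤ m → ¬ GoodAt x e M m v (i0 + k' + a)) :=
      ⟨Nat.find htail, Nat.find_spec htail, fun k' h => Nat.find_min htail h⟩
    have hk0 : k ≠ 0 := by
      rintro rfl
      exact hk 0 le_rfl (by omega) (by simpa using h0)
    obtain ⟨k', rfl⟩ := Nat.exists_eq_succ_of_ne_zero hk0
    have h1 := hmin k' (by omega)
    push Not at h1
    obtain ⟨a, ha0, ham, hga⟩ := h1
    have haz : a = 0 := by
      by_contra hne
      apply hk (a - 1) (by omega) (by omega)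
      rwa [show i0 + ((k' + 1 : ℕ) : ℤ) + (a - 1) = i0 + k' + a by push_cast; ring]
    subst haz
    rw [add_zero] at hga
    set i := i0 + (k' : ℤ) with hi
    refine ⟨fun j => i - j, fun j hj => ⟨j, by omega, by omega, by simpa using hga⟩, ?_⟩
    have key : ∀ j j' : ℕ, j < j' → j' < m →
        wordSegZ x (i - j) (4 * m) = wordSegZ x (i - j') (4 * m) → False := by
      intro j j' hjj hj' he
      rw [seg_eq_iff] at he
      apply hk (j' - j - 1) (by omega) (by omega)
      apply goodAt_congr x e M m v i _ _ hga
      intro r hr0 hr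
      have := he (r + j') (by omega) (by push_cast; omega)
      rw [show i + r = i - j' + (r + j') by ring, ← this]
      congr 1
      push_cast
      omega
    intro j hj j' hj' he
    rcases lt_trichotomy j j' with h | h | h
    · exact (key j j' h hj' he).elim
    · exact h
    · exact (key j' j h hj he.symm).elim

theorem exists_markers [Fintype A] (x : ℤ → A) (hx : RightAper x) (m : ℕ) :
    ∃ M : Set (List A), (∀ v ∈ M, v.length = m) ∧
      (∀ i : ℤ, ∃ j : ℤ, 0 ≤ j ∧ j ≤ 2 * m ∧ wordSegZ x (i + j) m ∈ M) ∧
      m * M.ncard ≤ complexity (FacZ x) (4 * m) := by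
  obtain ⟨e, he⟩ := exists_injective_nat (List A)
  obtain ⟨M, hM⟩ := exists_greedy x e m
  refine ⟨M, ?_, ?_, ?_⟩
  · intro v hv
    obtain ⟨i, h1, -⟩ := (hM v).1 hv
    rw [← h1, seg_length]
  · intro i
    by_contra hcon
    push Not at hcon
    apply hcon m (by omega) (by omega)
    rw [hM]
    exact ⟨i, rfl, fun j h0 hj hm => (hcon j h0 hj hm).elim⟩
  · have hex : ∀ v : List A, ∃ f : ℕ → ℤ, v ∈ M →
        (∀ j < m, ∃ a : ℤ, 0 ≤ a ∧ a ≤ m ∧ GoodAt x e M m v (f j + a)) ∧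
      ∀ j < m, ∀ j' < m, wordSegZ x (f j) (4 * m) = wordSegZ x (f j') (4 * m) → j = j' := by
      intro v
      by_cases hv : v ∈ M
      · obtain ⟨i, hi⟩ := (hM v).1 hv
        obtain ⟨f, hf⟩ := good_class x hx e M m v i hi
        exact ⟨f, fun _ => hf⟩
      · exact ⟨fun _ => 0, fun h => (hv h).elim⟩
    choose f hf using hex
    have key : ∀ v ∈ M, ∀ v' ∈ M, ∀ j < m, ∀ j' < m,
        wordSegZ x (f v j) (4 * m) = wordSegZ x (f v' j') (4 * m) → ¬ e v < e v' := by
      intro v hv v' hv' j hj j' hj' heq hlt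
      obtain ⟨a, ha0, ham, hga⟩ := (hf v hv).1 j hj
      obtain ⟨b, hb0, hbm, hgb⟩ := (hf v' hv').1 j' hj'
      rw [seg_eq_iff] at heq
      have hv2 : wordSegZ x (f v' j' + b + (a - b + m)) m = v := by
        rw [← hga.1, seg_eq_iff]
        intro r h0 hr
        have := heq (a + m + r) (by omega) (by push_cast; omega)
        rw [show f v j + a + m + r = f v j + (a + m + r) by ring, this]
        congr 1
        ring
      have := hgb.2 (a - b + m) (by omega) (by omega)
      rw [hv2] at this
      exact this hv hlt
    apply card_mul_le x M m (4 * m) f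
    intro v hv v' hv' j hj j' hj' heq
    have h1 := key v hv v' hv' j hj j' hj' heq
    have h2 := key v' hv' v hv j' hj' j hj heq.symm
    have h3 : v = v' := he (by omega)
    subst h3
    exact ⟨rfl, (hf v hv).2 j hj j' hj' heq⟩

/-! ### Periods -/

/-- `x` has period `q` on `[lo, hi)` -/
def Per (x : ℤ → A) (lo hi q : ℤ) : Prop := ∀ k : ℤ, lo ≤ k → k + q < hi → x k = x (k + q)

theorem per_mono (x : ℤ → A) {lo hi lo' hi' q : ℤ} (h : Per x lo hi q) (h1 : lo ≤ lo')
    (h2 : hi' ≤ hi) : Per x lo' hi' q := fun k a b => h k (by omega) (by omega)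

theorem per_glue (x : ℤ → A) {a b c d q : ℤ} (h1 : Per x a b q) (h2 : Per x c d q)
    (h : c + q ≤ b) : Per x a d q := by
  intro k h3 h4
  by_cases hk : k + q < b
  · exact h1 k h3 hk
  · exact h2 k (by omega) h4

/-- minimal period of the word `v` -/
noncomputable def minPer (x : ℤ → A) (m : ℕ) (v : List A) : ℕ :=
  sInf {d : ℕ | 0 < d ∧ ∃ o : ℤ, wordSegZ x o m = v ∧ Per x o (o + m) d}

theorem per_transfer (x : ℤ → A) (o o' : ℤ) (m : ℕ) (d : ℕ)
    (h : wordSegZ x o m = wordSegZ x o' m) (hp : Per x o (o + m) d) : Per x o' (o' + m) d := by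
  intro k h1 h2
  rw [seg_eq_iff] at h
  have e1 := h (k - o') (by omega) (by omega)
  have e2 := h (k - o' + d) (by omega) (by omega)
  have e3 := hp (o + (k - o')) (by omega) (by omega)
  rw [show o' + (k - o') = k by ring] at e1
  rw [show o' + (k - o' + d) = k + d by ring] at e2
  rw [← e1, ← e2, e3]
  congr 1
  ring

theorem minPer_spec (x : ℤ → A) (m : ℕ) (v : List A) (o : ℤ) (h : wordSegZ x o m = v) :
    0 < minPer x m v ∧ Per x o (o + m) (minPer x m v) ∧
      ∀ d : ℕ, 0 < d → Per x o (o + m) d → minPer x m v ≤ d := by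
  have hne : {d : ℕ | 0 < d ∧ ∃ o : ℤ, wordSegZ x o m = v ∧ Per x o (o + m) d}.Nonempty :=
    ⟨m + 1, by omega, o, h, fun k h1 h2 => by push_cast at h2; omega⟩
  obtain ⟨h1, o', h2, h3⟩ := Nat.sInf_mem hne
  refine ⟨h1, per_transfer x o' o m _ (h2.trans h.symm) h3, ?_⟩
  intro d hd hp
  exact Nat.sInf_le ⟨hd, o, h, hp⟩

/-- two close occurrences of `v` span a run of its minimal period -/
theorem close_occ (x : ℤ → A) (h : ℕ) (v : List A) (o : ℤ) (d : ℤ) (hd : 0 < d) (hdh : d < h)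
    (h1 : wordSegZ x o (2 * h) = v) (h2 : wordSegZ x (o + d) (2 * h) = v) :
    (minPer x (2 * h) v : ℤ) ≤ d ∧ ((minPer x (2 * h) v : ℤ) < h →
      Per x o (o + d + 2 * h) (minPer x (2 * h) v)) := by
  obtain ⟨-, p1, hmin⟩ := minPer_spec x _ v o h1
  obtain ⟨-, p2, -⟩ := minPer_spec x _ v _ h2
  push_cast at p1 p2
  have hle : (minPer x (2 * h) v : ℤ) ≤ d := by
    have h3 := h1.trans h2.symm
    rw [seg_eq_iff] at h3
    have := hmin d.toNat (by omega) (by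
      intro k hk1 hk2
      have := h3 (k - o) (by omega) (by push_cast at hk2 ⊢; omega)
      rw [show o + (k - o) = k by ring] at this
      rw [this]
      congr 1
      omega)
    omega
  exact ⟨hle, fun hlt => per_glue x p1 p2 (by omega)⟩

theorem class_count [Fintype A] (x : ℤ → A) (C : Set ℤ) (L R h l : ℕ) (hl : L + R + h ≤ l + 1)
    (hyp : ∀ c ∈ C, ∀ c' ∈ C, ∀ d : ℤ, 0 < d → d < h →
      (∀ r : ℤ, -L ≤ r → r < R → x (c' - d + r) = x (c + r)) →
      (∀ r : ℤ, -L ≤ r → r < R → x (c + d + r) = x (c' + r)) → False) :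
    h * ((fun c => wordSegZ x (c - L) (L + R)) '' C).ncard ≤ complexity (FacZ x) l := by
  set Z := (fun c => wordSegZ x (c - L) (L + R)) '' C with hZ
  have hex : ∀ z : List A, ∃ c : ℤ, z ∈ Z → c ∈ C ∧ wordSegZ x (c - L) (L + R) = z := by
    intro z
    by_cases hz : z ∈ Z
    · obtain ⟨c, hc⟩ := hz
      exact ⟨c, fun _ => hc⟩
    · exact ⟨0, fun h => (hz h).elim⟩
  choose g hg using hex
  have key : ∀ z ∈ Z, ∀ z' ∈ Z, ∀ j < h, ∀ j' < h,
      wordSegZ x (g z - L - (j : ℕ)) l = wordSegZ x (g z' - L - (j' : ℕ)) l → ¬ j < j' := by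
    intro z hz z' hz' j hj j' hj' he hlt
    rw [seg_eq_iff] at he
    apply hyp (g z) (hg z hz).1 (g z') (hg z' hz').1 (j' - j) (by omega) (by omega)
    · intro r h1 h2
      have := he (r + L + j) (by omega) (by omega)
      rw [show g z + r = g z - L - j + (r + L + j) by ring, this]
      congr 1
      ring
    · intro r h1 h2
      have := he (r + L + j') (by omega) (by omega)
      rw [show g z' + r = g z' - L - j' + (r + L + j') by ring, ← this]
      congr 1
      ring
  apply card_mul_le x Z h l (fun z j => g z - L - (j : ℕ))
  intro z hz z' hz' j hj j' hj' he
  have h1 := key z hz z' hz' j hj j' hj' he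
  have h2 := key z' hz' z hz j' hj' j hj he.symm
  have h3 : j = j' := by omega
  subst h3
  refine ⟨?_, rfl⟩
  rw [← (hg z hz).2, ← (hg z' hz').2, seg_eq_iff]
  rw [seg_eq_iff] at he
  intro r hr0 hr
  have := he (r + j) (by omega) (by push_cast at hr; omega)
  rw [show g z - L + r = g z - L - j + (r + j) by ring, this]
  congr 1
  ring

/-- admissible cut positions, contexts `L` to the left and `R` to the right -/
def Adm (x : ℤ → A) (h : ℕ) (v : List A) (a b : ℤ) (c : ℤ) : Prop :=
  wordSegZ x (c - h) (2 * h) = v ∧ ((minPer x (2 * h) v : ℤ) < h →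
    Per x a b (minPer x (2 * h) v) ∨
    ¬ Per x (c - h - minPer x (2 * h) v) (c + h) (minPer x (2 * h) v) ∨
    ¬ Per x (c - h) (c + h + minPer x (2 * h) v) (minPer x (2 * h) v))

theorem per_unique (x : ℤ → A) (L R h q : ℕ) (hL : h ≤ L) (hR : h ≤ R) (hq : 0 < q) (hqh : q < h)
    (c c' : ℤ) (he : wordSegZ x (c - h) (2 * h) = wordSegZ x (c' - h) (2 * h))
    (h1 : Per x (c - L) (c + R) q) (h2 : Per x (c' - L) (c' + R) q) :
    wordSegZ x (c - L) (L + R) = wordSegZ x (c' - L) (L + R) := by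
  rw [seg_eq_iff] at he
  have hmid : ∀ r : ℤ, -h ≤ r → r < h → x (c + r) = x (c' + r) := by
    intro r a b
    have := he (r + h) (by omega) (by push_cast; omega)
    rwa [show c - h + (r + h) = c + r by ring, show c' - h + (r + h) = c' + r by ring] at this
  have hup : ∀ n : ℕ, (n : ℤ) < R → x (c + n) = x (c' + n) := by
    intro n
    induction n using Nat.strong_induction_on with
    | _ n ih =>
      intro hn
      by_cases hnh : (n : ℤ) < h
      · exact hmid n (by omega) hnh
      · have e := ih (n - q) (by omega) (by omega)
        have e1 := h1 (c + (n - q : ℕ)) (by omega) (by omega)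
        have e2 := h2 (c' + (n - q : ℕ)) (by omega) (by omega)
        rw [show c + (n : ℤ) = c + (n - q : ℕ) + q by omega, ← e1, e, e2]
        congr 1
        omega
  have hdn : ∀ n : ℕ, (n : ℤ) ≤ L → x (c - n) = x (c' - n) := by
    intro n
    induction n using Nat.strong_induction_on with
    | _ n ih =>
      intro hn
      by_cases hnh : (n : ℤ) ≤ h
      · exact hmid (-n) (by omega) (by omega)
      · have e := ih (n - q) (by omega) (by omega)
        have e1 := h1 (c - n) (by omega) (by omega)
        have e2 := h2 (c' - n) (by omega) (by omega)
        rw [e1, e2, show c - (n : ℤ) + q = c - (n - q : ℕ) by omega, e]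
        congr 1
        omega
  rw [seg_eq_iff]
  intro r hr0 hr
  push_cast at hr
  by_cases hrL : r < L
  · have := hdn (L - r).toNat (by omega)
    rw [show c - L + r = c - ((L - r).toNat : ℤ) by omega, this]
    congr 1
    omega
  · have := hup (r - L).toNat (by omega)
    rw [show c - L + r = c + ((r - L).toNat : ℤ) by omega, this]
    congr 1
    omega

theorem adm_count [Fintype A] (x : ℤ → A) (h L R l : ℕ) (v : List A) (hh : 0 < h)
    (hL : h ≤ L) (hR : h ≤ R) (hl : L + R + h ≤ l + 1) :
    h * ((fun c => wordSegZ x (c - L) (L + R)) '' {c | Adm x h v (c - L) (c + R) c}).ncard ≤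
      h + 2 * complexity (FacZ x) l := by
  set q := minPer x (2 * h) v with hq
  have hv : ∀ c c' d : ℤ, wordSegZ x (c - h) (2 * h) = v →
      (∀ r : ℤ, -L ≤ r → r < R → x (c' + d + r) = x (c + r)) →
      wordSegZ x (c' - h + d) (2 * h) = v := by
    intro c c' d h1 h2
    rw [← h1, seg_eq_iff]
    intro r hr0 hr
    push_cast at hr
    have := h2 (r - h) (by omega) (by omega)
    rw [show c' - h + d + r = c' + d + (r - h) by ring, this]
    congr 1
    ring
  have hfin : ∀ C : Set ℤ, ((fun c => wordSegZ x (c - L) (L + R)) '' C).Finite := fun C =>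
    (words_finite (L + R)).subset (by rintro _ ⟨i, -, rfl⟩; exact seg_length _ _ _)
  by_cases hqh : (q : ℤ) < h
  · set C1 := {c : ℤ | wordSegZ x (c - h) (2 * h) = v ∧ Per x (c - L) (c + R) q} with hC1
    set C2 := {c : ℤ | wordSegZ x (c - h) (2 * h) = v ∧ ¬ Per x (c - h - q) (c + h) q} with hC2
    set C3 := {c : ℤ | wordSegZ x (c - h) (2 * h) = v ∧ ¬ Per x (c - h) (c + h + q) q} with hC3
    set w := (fun c => wordSegZ x (c - L) (L + R)) with hw
    have hsub : w '' {c | Adm x h v (c - L) (c + R) c} ⊆ w '' C1 ∪ (w '' C2 ∪ w '' C3) := by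
      rintro _ ⟨c, ⟨hc1, hc2⟩, rfl⟩
      rcases hc2 hqh with h1 | h1 | h1
      · exact Or.inl ⟨c, ⟨hc1, h1⟩, rfl⟩
      · exact Or.inr (Or.inl ⟨c, ⟨hc1, h1⟩, rfl⟩)
      · exact Or.inr (Or.inr ⟨c, ⟨hc1, h1⟩, rfl⟩)
    have hcard : (w '' {c | Adm x h v (c - L) (c + R) c}).ncard ≤
        (w '' C1).ncard + ((w '' C2).ncard + (w '' C3).ncard) :=
      (Set.ncard_le_ncard hsub ((hfin _).union ((hfin _).union (hfin _)))).trans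
        ((Set.ncard_union_le _ _).trans (Nat.add_le_add_left (Set.ncard_union_le _ _) _))
    have b1 : (w '' C1).ncard ≤ 1 := by
      rw [Set.ncard_le_one (hfin _)]
      rintro _ ⟨c, ⟨h1, h2⟩, rfl⟩ _ ⟨c', ⟨h1', h2'⟩, rfl⟩
      have hq0 := (minPer_spec x _ v _ h1).1
      exact per_unique x L R h q hL hR hq0 (by omega) c c' (h1.trans h1'.symm) h2 h2'
    have b2 : h * (w '' C2).ncard ≤ complexity (FacZ x) l := by
      apply class_count x C2 L R h l hl
      rintro c ⟨h1, h2⟩ c' ⟨h1', h2'⟩ d hd hdh e1 e2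
      have o1 := hv c c' (-d) h1 (by simpa [sub_eq_add_neg] using e1)
      obtain ⟨k1, k2⟩ := close_occ x h v (c' - h + -d) d hd hdh o1 (by simpa using h1')
      exact h2' (per_mono x (k2 hqh) (by omega) (by omega))
    have b3 : h * (w '' C3).ncard ≤ complexity (FacZ x) l := by
      apply class_count x C3 L R h l hl
      rintro c ⟨h1, h2⟩ c' ⟨h1', h2'⟩ d hd hdh e1 e2
      have o1 := hv c' c d h1' e2
      obtain ⟨k1, k2⟩ := close_occ x h v (c - h) d hd hdh h1 o1
      exact h2 (per_mono x (k2 hqh) (by omega) (by omega))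
    nlinarith
  · have : h * ((fun c => wordSegZ x (c - L) (L + R)) ''
        {c | Adm x h v (c - L) (c + R) c}).ncard ≤ complexity (FacZ x) l := by
      apply class_count x _ L R h l hl
      rintro c ⟨h1, h2⟩ c' ⟨h1', h2'⟩ d hd hdh e1 e2
      have o1 := hv c' c d h1' e2
      obtain ⟨k1, k2⟩ := close_occ x h v (c - h) d hd hdh h1 o1
      omega
    omega

/-! ### Existence of admissible cuts -/

theorem slide_right (x : ℤ → A) (h : ℕ) (v : List A) (b : ℤ)
    (hqh : (minPer x (2 * h) v : ℤ) < h) (n : ℕ) :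
    ∀ c : ℤ, wordSegZ x (c - h) (2 * h) = v → c + h ≤ b → b - c - h ≤ n →
      Per x (c - h) b (minPer x (2 * h) v) ∨ ∃ c', c ≤ c' ∧ c' + h ≤ b ∧
        wordSegZ x (c' - h) (2 * h) = v ∧
        ¬ Per x (c' - h) (c' + h + minPer x (2 * h) v) (minPer x (2 * h) v) := by
  set q := minPer x (2 * h) v with hq
  induction n with
  | zero =>
    intro c hc h1 h2
    left
    exact per_mono x (minPer_spec x _ v _ hc).2.1 le_rfl (by push_cast at h2 ⊢; omega)
  | succ n ih =>
    intro c hc h1 h2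
    have hq0 : 0 < q := (minPer_spec x _ v _ hc).1
    by_cases hp : Per x (c - h) (c + h + q) q
    · by_cases hb : c + q + h ≤ b
      · have hc2 : wordSegZ x (c + q - h) (2 * h) = v := by
          rw [← hc, seg_eq_iff]
          intro r hr0 hr
          push_cast at hr
          rw [hp (c - h + r) (by omega) (by omega)]
          congr 1
          ring
        rcases ih (c + q) hc2 hb (by push_cast at h2; omega) with h3 | ⟨c', h3, h4⟩
        · left
          exact per_glue x hp h3 (by omega)
        · right
          exact ⟨c', by omega, h4⟩
      · left
        exact per_mono x hp le_rfl (by omega)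
    · right
      exact ⟨c, le_rfl, h1, hc, hp⟩

theorem slide_left (x : ℤ → A) (h : ℕ) (v : List A) (a : ℤ)
    (hqh : (minPer x (2 * h) v : ℤ) < h) (n : ℕ) :
    ∀ c : ℤ, wordSegZ x (c - h) (2 * h) = v → a ≤ c - h → c - h - a ≤ n →
      Per x a (c + h) (minPer x (2 * h) v) ∨ ∃ c', c' ≤ c ∧ a ≤ c' - h ∧
        wordSegZ x (c' - h) (2 * h) = v ∧
        ¬ Per x (c' - h - minPer x (2 * h) v) (c' + h) (minPer x (2 * h) v) := by
  set q := minPer x (2 * h) v with hq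
  induction n with
  | zero =>
    intro c hc h1 h2
    left
    exact per_mono x (minPer_spec x _ v _ hc).2.1 (by push_cast at h2 ⊢; omega)
      (by push_cast at h2 ⊢; omega)
  | succ n ih =>
    intro c hc h1 h2
    have hq0 : 0 < q := (minPer_spec x _ v _ hc).1
    by_cases hp : Per x (c - h - q) (c + h) q
    · by_cases hb : a ≤ c - q - h
      · have hc2 : wordSegZ x (c - q - h) (2 * h) = v := by
          rw [← hc, seg_eq_iff]
          intro r hr0 hr
          push_cast at hr
          rw [hp (c - q - h + r) (by omega) (by omega)]
          congr 1
          ring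
        rcases ih (c - q) hc2 hb (by push_cast at h2; omega) with h3 | ⟨c', h3, h4⟩
        · left
          exact per_glue x h3 hp (by omega)
        · right
          exact ⟨c', by omega, h4⟩
      · left
        exact per_mono x hp (by omega) le_rfl
    · right
      exact ⟨c, le_rfl, h1, hc, hp⟩

theorem exists_adm (x : ℤ → A) (h : ℕ) (v : List A) (a b c : ℤ)
    (hc : wordSegZ x (c - h) (2 * h) = v) (h1 : a ≤ c - h) (h2 : c + h ≤ b) :
    ∃ c', a ≤ c' - h ∧ c' + h ≤ b ∧ Adm x h v a b c' := by
  by_cases hqh : (minPer x (2 * h) v : ℤ) < h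
  · rcases slide_right x h v b hqh (b - c - h).toNat c hc h2 (by omega) with
      h3 | ⟨c', h3, h4, h5, h6⟩
    · rcases slide_left x h v a hqh (c - h - a).toNat c hc h1 (by omega) with
        h4 | ⟨c', h4, h5, h6, h7⟩
      · exact ⟨c, h1, h2, hc, fun _ => Or.inl (per_glue x h4 h3 (by omega))⟩
      · exact ⟨c', h5, by omega, h6, fun _ => Or.inr (Or.inl h7)⟩
    · exact ⟨c', by omega, h4, h5, fun _ => Or.inr (Or.inr h6)⟩
  · exact ⟨c, h1, h2, hc, fun h => (hqh h).elim⟩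

/-! ### Counting -/

theorem geom_bound (K : Finset ℕ) (n : ℕ) (hn : 0 < n) (hK : ∀ k ∈ K, n < 12 * 2 ^ k) :
    ∑ k ∈ K, ((1 / 2 : ℝ) ^ k) ≤ 24 / n ∧ ∑ k ∈ K, ((1 / 4 : ℝ) ^ k) ≤ 192 / n ^ 2 := by
  have hn' : (0 : ℝ) < n := by exact_mod_cast hn
  rcases K.eq_empty_or_nonempty with rfl | hne
  · simp only [Finset.sum_empty]
    constructor <;> positivity
  · set k0 := K.min' hne with hk0
    have hsub : K ⊆ Finset.Ico k0 (K.max' hne + 1) := by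
      intro k hk
      rw [Finset.mem_Ico]
      exact ⟨K.min'_le k hk, Nat.lt_succ_of_le (K.le_max' k hk)⟩
    have h0 : (n : ℝ) < 12 * 2 ^ k0 := by exact_mod_cast hK k0 (K.min'_mem hne)
    have hpos : (0 : ℝ) < 2 ^ k0 := by positivity
    have h1 : (1 / 2 : ℝ) ^ k0 ≤ 12 / n := by
      rw [one_div_pow, div_le_div_iff₀ hpos hn']
      linarith
    have h2 : (1 / 4 : ℝ) ^ k0 ≤ 144 / n ^ 2 := by
      have : (1 / 4 : ℝ) ^ k0 = ((1 / 2 : ℝ) ^ k0) ^ 2 := by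
        rw [← pow_mul, mul_comm, pow_mul]; norm_num
      rw [this, show (144 : ℝ) / n ^ 2 = (12 / n) ^ 2 by rw [div_pow]; norm_num]
      gcongr
    have g : ∀ c : ℝ, 0 ≤ c → c < 1 → ∑ k ∈ K, c ^ k ≤ c ^ k0 / (1 - c) := by
      intro c hc0 hc1
      refine (Finset.sum_le_sum_of_subset_of_nonneg hsub (fun i _ _ => by positivity)).trans ?_
      exact geom_sum_Ico_le_of_lt_one hc0 hc1
    constructor
    · refine (g (1 / 2) (by norm_num) (by norm_num)).trans ?_
      rw [show (24 : ℝ) / n = 12 / n / (1 - 1 / 2) by ring]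
      gcongr
    · refine (g (1 / 4) (by norm_num) (by norm_num)).trans ?_
      rw [show (192 : ℝ) / n ^ 2 = 144 / n ^ 2 / (1 - 1 / 4) by ring]
      gcongr

theorem union_bound (U : Set (List A)) (K : Finset ℕ) (n P8 P3 : ℕ) (hn : 0 < n)
    (hK : ∀ k ∈ K, n < 12 * 2 ^ k) (M : ℕ → Set (List A)) (hMf : ∀ k, (M k).Finite)
    (hM : ∀ k ∈ K, 2 * 2 ^ k * (M k).ncard ≤ P8)
    (G : ℕ → List A → Set (List A)) (hGf : ∀ k v, (G k v).Finite)
    (hG : ∀ k ∈ K, ∀ v, 2 ^ k * (G k v).ncard ≤ 2 ^ k + 2 * P3)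
    (hU : ∀ u ∈ U, ∃ k ∈ K, ∃ v ∈ M k, u ∈ G k v) :
    (U.ncard : ℝ) ≤ 12 * (P8 : ℝ) / n + 192 * (P8 : ℝ) * (P3 : ℝ) / n ^ 2 := by
  classical
  set W : Finset (List A) := K.biUnion fun k => (hMf k).toFinset.biUnion fun v =>
    (hGf k v).toFinset with hW
  have hUW : U ⊆ (W : Set (List A)) := by
    intro u hu
    obtain ⟨k, hk, v, hv, huv⟩ := hU u hu
    simp only [hW, Finset.coe_biUnion, Set.mem_iUnion]
    exact ⟨k, hk, v, by simpa using hv, by simpa using huv⟩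
  have h1 : U.ncard ≤ W.card := by
    rw [← Set.ncard_coe_finset]
    exact Set.ncard_le_ncard hUW (Finset.finite_toSet W)
  have h2 : W.card ≤ ∑ k ∈ K, ∑ v ∈ (hMf k).toFinset, (G k v).ncard := by
    refine Finset.card_biUnion_le.trans (Finset.sum_le_sum fun k _ => ?_)
    refine Finset.card_biUnion_le.trans (Finset.sum_le_sum fun v _ => ?_)
    rw [Set.ncard_eq_toFinset_card _ (hGf k v)]
  have h3 : ∀ k ∈ K, ((∑ v ∈ (hMf k).toFinset, (G k v).ncard : ℕ) : ℝ) ≤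
      P8 / 2 * (1 / 2) ^ k + P8 * P3 * (1 / 4) ^ k := by
    intro k hk
    have hpos : (0 : ℝ) < 2 ^ k := by positivity
    have hg : ∀ v, ((G k v).ncard : ℝ) ≤ 1 + 2 * P3 / 2 ^ k := by
      intro v
      have : (2 : ℝ) ^ k * (G k v).ncard ≤ 2 ^ k + 2 * P3 := by exact_mod_cast hG k hk v
      rw [← div_self hpos.ne', ← add_div, le_div_iff₀ hpos]
      linarith
    have hm : ((hMf k).toFinset.card : ℝ) ≤ P8 / (2 * 2 ^ k) := by
      have : (2 : ℝ) * 2 ^ k * (M k).ncard ≤ P8 := by exact_mod_cast hM k hk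
      rw [← Set.ncard_eq_toFinset_card _ (hMf k), le_div_iff₀ (by positivity)]
      linarith
    push_cast
    calc ∑ v ∈ (hMf k).toFinset, ((G k v).ncard : ℝ)
        ≤ ∑ v ∈ (hMf k).toFinset, (1 + 2 * P3 / 2 ^ k : ℝ) := Finset.sum_le_sum fun v _ => hg v
      _ = (hMf k).toFinset.card * (1 + 2 * P3 / 2 ^ k : ℝ) := by
        rw [Finset.sum_const, nsmul_eq_mul]
      _ ≤ P8 / (2 * 2 ^ k) * (1 + 2 * P3 / 2 ^ k : ℝ) := by gcongr
      _ = P8 / 2 * (1 / 2) ^ k + P8 * P3 * (1 / 4) ^ k := by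
        rw [show (1 / 4 : ℝ) ^ k = (1 / 2) ^ k * (1 / 2) ^ k by rw [← mul_pow]; norm_num]
        rw [one_div_pow]
        field_simp
  obtain ⟨g1, g2⟩ := geom_bound K n hn hK
  have h4 : (U.ncard : ℝ) ≤ ((∑ k ∈ K, ∑ v ∈ (hMf k).toFinset, (G k v).ncard : ℕ) : ℝ) := by
    exact_mod_cast h1.trans h2
  calc (U.ncard : ℝ) ≤ _ := h4
    _ = ∑ k ∈ K, ((∑ v ∈ (hMf k).toFinset, (G k v).ncard : ℕ) : ℝ) := by push_cast; rfl
    _ ≤ ∑ k ∈ K, (P8 / 2 * (1 / 2 : ℝ) ^ k + P8 * P3 * (1 / 4) ^ k) := Finset.sum_le_sum h3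
    _ = P8 / 2 * ∑ k ∈ K, (1 / 2 : ℝ) ^ k + P8 * P3 * ∑ k ∈ K, (1 / 4 : ℝ) ^ k := by
      rw [Finset.sum_add_distrib, Finset.mul_sum, Finset.mul_sum]
    _ ≤ P8 / 2 * (24 / n) + P8 * P3 * (192 / n ^ 2) := by gcongr
    _ = _ := by ring

theorem adm_mono (x : ℤ → A) (h : ℕ) (v : List A) {a b a' b' c : ℤ} (hA : Adm x h v a b c)
    (h1 : a ≤ a') (h2 : b' ≤ b) : Adm x h v a' b' c :=
  ⟨hA.1, fun hq => (hA.2 hq).imp_left fun hp => per_mono x hp h1 h2⟩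

/-- the word at `[i, i+N)` may be cut at `c` with a marker of length `2 * 2^k` -/
def CutAt (x : ℤ → A) (M : ℕ → Set (List A)) (i : ℤ) (N : ℕ) (c : ℤ) (k : ℕ) : Prop :=
  i ≤ c - (2 ^ k : ℕ) ∧ c + (2 ^ k : ℕ) ≤ i + N ∧ N < 12 * 2 ^ k ∧
    ∃ v ∈ M k, Adm x (2 ^ k) v i (i + N) c

theorem exists_cut (x : ℤ → A) (M : ℕ → Set (List A))
    (hM : ∀ k, ∀ i : ℤ, ∃ j : ℤ, 0 ≤ j ∧ j ≤ 2 * (2 * 2 ^ k : ℕ) ∧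
      wordSegZ x (i + j) (2 * 2 ^ k) ∈ M k) (i : ℤ) (N : ℕ) (hN : 6 ≤ N) :
    ∃ c k, CutAt x M i N c k := by
  classical
  let Q : ℕ → Prop := fun k => ∃ j : ℤ, 0 ≤ j ∧ j + (2 * 2 ^ k : ℕ) ≤ N ∧
    wordSegZ x (i + j) (2 * 2 ^ k) ∈ M k
  have hQ : ∀ k, 6 * 2 ^ k ≤ N → Q k := by
    intro k hk
    obtain ⟨j, h0, h1, h2⟩ := hM k i
    refine ⟨j, h0, ?_, h2⟩
    push_cast at h1 ⊢
    have : (6 : ℤ) * 2 ^ k ≤ N := by exact_mod_cast hk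
    omega
  have h0 : Q 0 := hQ 0 (by omega)
  have hbd : ∀ k, Q k → k ≤ N := by
    rintro k ⟨j, h0, h1, -⟩
    have := @Nat.lt_two_pow_self k
    omega
  set k := Nat.findGreatest Q N with hk
  have hQk : Q k := Nat.findGreatest_spec (Nat.zero_le N) h0
  have hQk1 : ¬ Q (k + 1) := by
    intro h
    have := Nat.le_findGreatest (hbd _ h) h
    omega
  obtain ⟨j, hj0, hj1, hj2⟩ := hQk
  obtain ⟨c, hc1, hc2, hc3⟩ := exists_adm x (2 ^ k) _ i (i + N) (i + j + (2 ^ k : ℕ))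
    (rfl) (by omega) (by omega)
  refine ⟨c, k, hc1, hc2, ?_, _, ?_, hc3⟩
  · by_contra hcon
    apply hQk1
    apply hQ
    rw [pow_succ]
    omega
  · simpa using hj2

theorem core [Fintype A] (x : ℤ → A) (hx : RightAper x) :
    ∃ S T : Set (List A), FacZ x ⊆ prodL S T ∧
        ∀ n : ℕ, 6 ≤ n →
          (complexity S n : ℝ) ≤
            12 * (complexity (FacZ x) (8 * n) : ℝ) / n +
            192 * (complexity (FacZ x) (8 * n) : ℝ) * (complexity (FacZ x) (3 * n) : ℝ) / n ^ 2 ∧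
          (complexity T n : ℝ) ≤
            12 * (complexity (FacZ x) (8 * n) : ℝ) / n +
            192 * (complexity (FacZ x) (8 * n) : ℝ) * (complexity (FacZ x) (3 * n) : ℝ) / n ^ 2 := by
  choose M hMlen hMcov hMcard using fun k : ℕ => exists_markers x hx (2 * 2 ^ k)
  have hMf : ∀ k, (M k).Finite := fun k => (words_finite _).subset (hMlen k)
  have hfin : ∀ (n : ℕ) (f : ℤ → ℤ) (C : Set ℤ), ((fun c => wordSegZ x (f c) n) '' C).Finite :=
    fun n f C => (words_finite n).subset (by rintro _ ⟨i, -, rfl⟩; exact seg_length _ _ _)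
  refine ⟨{u | u.length < 6} ∪ {u | ∃ i N c k, CutAt x M i N c k ∧
      u = wordSegZ x i (c - i).toNat},
    {u | u.length < 6} ∪ {u | ∃ i N c k, CutAt x M i N c k ∧
      u = wordSegZ x c (i + N - c).toNat}, ?_, ?_⟩
  · rintro _ ⟨i, N, rfl⟩
    by_cases hN : 6 ≤ N
    · obtain ⟨c, k, hc⟩ := exists_cut x M hMcov i N hN
      refine ⟨_, Or.inr ⟨i, N, c, k, hc, rfl⟩, _, Or.inr ⟨i, N, c, k, hc, rfl⟩, ?_⟩
      have h1 := hc.1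
      have h2 := hc.2.1
      have h0 : (0 : ℤ) ≤ (2 ^ k : ℕ) := Int.natCast_nonneg _
      have hN2 : N = (c - i).toNat + (i + N - c).toNat := by omega
      have hc2 : i + ((c - i).toNat : ℤ) = c := by omega
      conv_lhs => rw [hN2, seg_append, hc2]
    · refine ⟨_, Or.inl ?_, [], Or.inl ?_, (List.append_nil _).symm⟩
      · show (wordSegZ x i N).length < 6
        rw [seg_length]; omega
      · show 0 < 6
        omega
  · intro n hn
    set K := (Finset.range (n + 1)).filter (fun k => 2 ^ k ≤ n ∧ n < 12 * 2 ^ k) with hKdef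
    have hKmem : ∀ k, 2 ^ k ≤ n → n < 12 * 2 ^ k → k ∈ K := by
      intro k h1 h2
      have := @Nat.lt_two_pow_self k
      simp only [hKdef, Finset.mem_filter, Finset.mem_range]
      exact ⟨by omega, h1, h2⟩
    have hK1 : ∀ k ∈ K, n < 12 * 2 ^ k := fun k hk => (Finset.mem_filter.1 hk).2.2
    have hK2 : ∀ k ∈ K, 2 ^ k ≤ n := fun k hk => (Finset.mem_filter.1 hk).2.1
    have hMK : ∀ k ∈ K, 2 * 2 ^ k * (M k).ncard ≤ complexity (FacZ x) (8 * n) := by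
      intro k hk
      have := hK2 k hk
      exact (hMcard k).trans (complexity_mono x (by omega))
    constructor
    · apply union_bound _ K n _ _ (by omega) hK1 M hMf hMK
        (fun k v => List.take n '' ((fun c : ℤ => wordSegZ x (c - n) (n + 2 ^ k)) ''
          {c | Adm x (2 ^ k) v (c - n) (c + (2 ^ k : ℕ)) c}))
      · intro k v
        exact (hfin _ _ _).image _
      · intro k hk v
        have h2 := hK2 k hk
        refine le_trans (Nat.mul_le_mul_left _ (Set.ncard_image_le (hfin _ _ _))) ?_
        exact adm_count x (2 ^ k) n (2 ^ k) (3 * n) v (by positivity) h2 le_rfl (by omega)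
      · rintro u ⟨hu | ⟨i, N, c, k, ⟨h1, h2, h3, v, hv, hA⟩, rfl⟩, hlen⟩
        · have : u.length < 6 := hu
          omega
        · rw [seg_length] at hlen
          refine ⟨k, hKmem k (by omega) (by omega), v, hv, _,
            ⟨c, adm_mono x _ v hA (by omega) (by omega), rfl⟩, ?_⟩
          rw [seg_take _ _ _ _ (by omega), hlen]
          congr 1
          omega
    · apply union_bound _ K n _ _ (by omega) hK1 M hMf hMK
        (fun k v => List.drop (2 ^ k) '' ((fun c : ℤ =>
          wordSegZ x (c - (2 ^ k : ℕ)) (2 ^ k + n)) ''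
          {c | Adm x (2 ^ k) v (c - (2 ^ k : ℕ)) (c + n) c}))
      · intro k v
        exact (hfin _ _ _).image _
      · intro k hk v
        have h2 := hK2 k hk
        refine le_trans (Nat.mul_le_mul_left _ (Set.ncard_image_le (hfin _ _ _))) ?_
        exact adm_count x (2 ^ k) (2 ^ k) n (3 * n) v (by positivity) le_rfl h2 (by omega)
      · rintro u ⟨hu | ⟨i, N, c, k, ⟨h1, h2, h3, v, hv, hA⟩, rfl⟩, hlen⟩
        · have : u.length < 6 := hu
          omega
        · rw [seg_length] at hlen
          refine ⟨k, hKmem k (by omega) (by omega), v, hv, _,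
            ⟨c, adm_mono x _ v hA (by omega) (by omega), rfl⟩, ?_⟩
          rw [seg_drop, hlen]
          congr 1
          omega

/-! ### Reductions -/

theorem seg_reverse (x : ℤ → A) (i : ℤ) (n : ℕ) :
    (wordSegZ x i n).reverse = wordSegZ (fun k => x (-k)) (-(i + n - 1)) n := by
  apply List.ext_getElem
  · simp [seg_length]
  · intro k h1 h2
    rw [seg_length] at h2
    simp only [seg_def, List.getElem_reverse, List.getElem_map, List.getElem_range,
      List.length_map, List.length_range]
    congr 1
    omega

theorem facZ_reverse (x : ℤ → A) : FacZ (fun k => x (-k)) = List.reverse '' FacZ x := by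
  ext u
  constructor
  · rintro ⟨i, n, rfl⟩
    refine ⟨_, ⟨-(i + n - 1), n, rfl⟩, ?_⟩
    rw [seg_reverse]
    congr 1
    omega
  · rintro ⟨_, ⟨i, n, rfl⟩, rfl⟩
    exact ⟨_, n, seg_reverse x i n⟩

theorem complexity_reverse (L : Set (List A)) (n : ℕ) :
    complexity (List.reverse '' L) n = complexity L n := by
  unfold complexity
  rw [← Set.ncard_image_of_injective {u ∈ L | u.length = n} List.reverse_injective]
  congr 1
  ext u
  constructor
  · rintro ⟨⟨w, hw, rfl⟩, hl⟩
    exact ⟨w, ⟨hw, by simpa using hl⟩, rfl⟩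
  · rintro ⟨w, ⟨hw, hl⟩, rfl⟩
    exact ⟨⟨w, hw, rfl⟩, by simpa using hl⟩

theorem core_left [Fintype A] (x : ℤ → A) (hx : RightAper (fun k => x (-k))) :
    ∃ S T : Set (List A), FacZ x ⊆ prodL S T ∧
        ∀ n : ℕ, 6 ≤ n →
          (complexity S n : ℝ) ≤
            12 * (complexity (FacZ x) (8 * n) : ℝ) / n +
            192 * (complexity (FacZ x) (8 * n) : ℝ) * (complexity (FacZ x) (3 * n) : ℝ) / n ^ 2 ∧
          (complexity T n : ℝ) ≤
            12 * (complexity (FacZ x) (8 * n) : ℝ) / n +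
            192 * (complexity (FacZ x) (8 * n) : ℝ) * (complexity (FacZ x) (3 * n) : ℝ) / n ^ 2 := by
  obtain ⟨S, T, h1, h2⟩ := core _ hx
  rw [facZ_reverse] at h1
  simp only [facZ_reverse, complexity_reverse] at h2
  refine ⟨List.reverse '' T, List.reverse '' S, ?_, ?_⟩
  · intro w hw
    obtain ⟨s, hs, t, ht, he⟩ := h1 ⟨w, hw, rfl⟩
    refine ⟨_, ⟨t, ht, rfl⟩, _, ⟨s, hs, rfl⟩, ?_⟩
    rw [← List.reverse_append, ← he, List.reverse_reverse]
  · intro n hn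
    simp only [complexity_reverse]
    exact (h2 n hn).symm

/-- a recurrent one-sided word extends to a two-sided word with the same factors -/
theorem exists_extension [Fintype A] (x : ℕ → A) (hr : Recurrent x) :
    ∃ y : ℤ → A, (∀ n : ℕ, y n = x n) ∧ FacZ y = Fac x := by
  have hocc : ∀ n : ℕ, ∃ i : ℕ, n ≤ i ∧ ∀ k < n, x (i + k) = x k := by
    intro n
    obtain ⟨i, hi, he⟩ := hr (wordSeg x 0 n) ⟨0, n, rfl⟩ n
    refine ⟨i, hi, fun k hk => ?_⟩
    have := congrArg (fun l => l[k]?) he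
    simpa [wordSeg, hk] using this.symm
  choose p hp1 hp2 using hocc
  let U : Ultrafilter ℕ := Filter.hyperfilter ℕ
  have hU : (U : Filter ℕ) ≤ Filter.atTop := Nat.hyperfilter_le_atTop
  have hlim : ∀ k : ℤ, ∃ a : A, ∀ᶠ n in (U : Filter ℕ), x ((p n + k).toNat) = a := by
    intro k
    have hex : ∀ᶠ n in (U : Filter ℕ), ∃ a : A, x ((p n + k).toNat) = a :=
      Filter.Eventually.of_forall fun n => ⟨_, rfl⟩
    rwa [Ultrafilter.eventually_exists_iff] at hex
  choose y hy using hlim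
  have hyn : ∀ n : ℕ, y n = x n := by
    intro n
    have h1 : ∀ᶠ k in (U : Filter ℕ), n < k := hU (Filter.eventually_gt_atTop n)
    obtain ⟨k, hk1, hk2⟩ := (h1.and (hy n)).exists
    rw [← hk2, show ((p k : ℤ) + (n : ℤ)).toNat = p k + n by omega]
    exact hp2 k n hk1
  refine ⟨y, hyn, ?_⟩
  ext u
  constructor
  · rintro ⟨i, n, rfl⟩
    have h1 : ∀ᶠ k in (U : Filter ℕ), i.natAbs ≤ k := hU (Filter.eventually_ge_atTop _)
    have h2 : ∀ᶠ k in (U : Filter ℕ), ∀ j ∈ Finset.range n,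
        x ((p k + (i + (j : ℕ))).toNat) = y (i + (j : ℕ)) := by
      rw [Filter.eventually_all_finset]
      intro j _
      exact hy _
    obtain ⟨k, hk1, hk2⟩ := (h1.and h2).exists
    have hpk := hp1 k
    refine ⟨(p k + i).toNat, n, ?_⟩
    rw [seg_def, wordSeg]
    apply List.map_congr_left
    intro j hj
    rw [← hk2 j (by simpa using hj)]
    congr 1
    omega
  · rintro ⟨i, n, rfl⟩
    refine ⟨i, n, ?_⟩
    rw [seg_def, wordSeg]
    apply List.map_congr_left
    intro j _
    rw [← hyn]
    push_cast
    rfl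

theorem stmt14 (A : Type u) [Fintype A] [Nonempty A] :
    (∀ x : ℤ → A, ¬ EventuallyPeriodicZ x →
      ∃ S T : Set (List A), FacZ x ⊆ prodL S T ∧
        ∀ n : ℕ, 6 ≤ n →
          (complexity S n : ℝ) ≤
            12 * (complexity (FacZ x) (8 * n) : ℝ) / n +
            192 * (complexity (FacZ x) (8 * n) : ℝ) * (complexity (FacZ x) (3 * n) : ℝ) / n ^ 2 ∧
          (complexity T n : ℝ) ≤
            12 * (complexity (FacZ x) (8 * n) : ℝ) / n +
            192 * (complexity (FacZ x) (8 * n) : ℝ) * (complexity (FacZ x) (3 * n) : ℝ) / n ^ 2) ∧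
    (∀ x : ℕ → A, ¬ UltimatelyPeriodic x → Recurrent x →
      ∃ S T : Set (List A), Fac x ⊆ prodL S T ∧
        ∀ n : ℕ, 6 ≤ n →
          (complexity S n : ℝ) ≤
            12 * (complexity (Fac x) (8 * n) : ℝ) / n +
            192 * (complexity (Fac x) (8 * n) : ℝ) * (complexity (Fac x) (3 * n) : ℝ) / n ^ 2 ∧
          (complexity T n : ℝ) ≤
            12 * (complexity (Fac x) (8 * n) : ℝ) / n +
            192 * (complexity (Fac x) (8 * n) : ℝ) * (complexity (Fac x) (3 * n) : ℝ) / n ^ 2) := by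
  constructor
  · intro x hx
    by_cases hR : RightAper x
    · exact core x hR
    · by_cases hL : RightAper (fun k => x (-k))
      · exact core_left x hL
      · exfalso
        apply hx
        unfold RightAper at hR hL
        push Not at hR hL
        obtain ⟨p, hp, N, hN⟩ := hR
        obtain ⟨p', hp', N', hN'⟩ := hL
        refine ⟨⟨p, hp, N, hN⟩, p', hp', -N', fun n hn => ?_⟩
        have := hN' (-n) (by omega)
        rw [neg_neg] at this
        rw [← this]
        congr 1
        ring
  · intro x hx hrec
    obtain ⟨y, hy, hF⟩ := exists_extension x hrec
    rw [← hF]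
    apply core
    intro p hp N
    by_contra hcon
    push Not at hcon
    apply hx
    refine ⟨N.toNat, p, hp, fun n hn => ?_⟩
    have := hcon n (by omega)
    rw [← hy, ← hy, ← this]
    push_cast
    rfl
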